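/- Let P be a finite natural partial order on {1,…,p}. Then Σ_{w ∈ ℒ(P)} (−1)^{comaj(w)} equals the number of dual P-domino tableaux, where comaj(w) = Σ_{i ∈ D(w)} (p − i) and D(w) is the descent set of the word w. -/

import Mathlib

/-- `s` is an order ideal of the poset `(Fin p, le)`. -/
def IsIdealR {p : ℕ} (le : Fin p → Fin p → Prop) (s : Finset (Fin p)) : Prop :=
  ∀ x y : Fin p, le x y → y ∈ s → x ∈ s

/-- `s` is a two-element chain of the poset `(Fin p, le)`. -/
def IsTwoChainR {p : ℕ} (le : Fin p → Fin p → Prop) (s : Finset (Fin p)) : Prop :=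
  ∃ a b : Fin p, a ≠ b ∧ le a b ∧ s = {a, b}

/-- `c` is a dual `P`-domino tableau: a chain `∅ = I₀ ⊂ I₁ ⊂ ⋯ ⊂ I_r = P` of order
ideals (`r = ⌈p/2⌉`) with `I_i − I_{i-1}` a two-element chain for `2 ≤ i ≤ r`, and
`I₁` a two-element chain if `p` is even, a single element if `p` is odd. -/
def IsDualDomino {p : ℕ} (le : Fin p → Fin p → Prop)
    (c : Fin ((p + 1) / 2 + 1) → Finset (Fin p)) : Prop :=
  c 0 = ∅ ∧ c (Fin.last ((p + 1) / 2)) = Finset.univ ∧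
  (∀ i, IsIdealR le (c i)) ∧
  (∀ i : Fin ((p + 1) / 2), c i.castSucc ⊆ c i.succ) ∧
  (∀ i : Fin ((p + 1) / 2), 1 ≤ (i : ℕ) → IsTwoChainR le (c i.succ \ c i.castSucc)) ∧
  (∀ i : Fin ((p + 1) / 2), (i : ℕ) = 0 →
    if Even p then IsTwoChainR le (c i.succ \ c i.castSucc)
    else ∃ a : Fin p, c i.succ \ c i.castSucc = {a})

open scoped Classical

/-- `w` (as the word `w 0, w 1, …, w (p-1)`) is a linear extension of `(Fin p, le)`. -/
def IsLinExtPerm {p : ℕ} (le : Fin p → Fin p → Prop) (w : Equiv.Perm (Fin p)) : Prop :=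
  ∀ i j : Fin p, le (w i) (w j) → w i ≠ w j → i < j

/-- The comajor index `comaj(w) = Σ_{i ∈ D(w)} (p − i)`, where `D(w)` is the set of
(1-based) descents of the word `w 0, …, w (p-1)`. -/
def comajP (p : ℕ) (w : Equiv.Perm (Fin p)) : ℕ :=
  ∑ i : Fin (p - 1),
    if w ⟨i.1 + 1, by have := i.2; omega⟩ < w ⟨i.1, by have := i.2; omega⟩
    then p - (i.1 + 1) else 0

/-!
Cut every word from its right end into consecutive pairs. A descent contributes an odd number to
`comaj` exactly when it occurs inside one of these pairs, so transposing a pair flips the sign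
`(-1) ^ comaj`. Transposing a suitably chosen pair whose entries do not increase in `P` is therefore
a sign-reversing involution, and only the linear extensions all of whose pairs are chains of `P`
survive, each with sign `1` because `P` is natural. Such a word is determined by the map sending
each element to the number of its pair: since `P` is natural, the word is the stable sort of this
map. The chains of sublevel sets of these maps are precisely the dual `P`-domino tableaux.
-/

lemma swap_apply_lt_swap_apply_of_covBy {α : Type*} [LinearOrder α] {i j a b : α} (hij : i ⋖ j)
    (hab : a < b) (hne : ¬(a = i ∧ b = j)) : Equiv.swap i j a < Equiv.swap i j b := by
  have hlt := hij.lt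
  have hle : ∀ c, i < c → j ≤ c := fun c hc => hij.ge_of_gt hc
  have hge : ∀ c, c < j → c ≤ i := fun c hc => hij.le_of_lt hc
  simp only [Equiv.swap_apply_def]
  grind

lemma IsLinExtPerm.mul_swap {p : ℕ} {le : Fin p → Fin p → Prop} {w : Equiv.Perm (Fin p)}
    (hw : IsLinExtPerm le w) {i j : Fin p} (hij : i ⋖ j) (hle : ¬le (w i) (w j)) :
    IsLinExtPerm le (w * Equiv.swap i j) := by
  intro a b hab hne
  have hlt : Equiv.swap i j a < Equiv.swap i j b := hw _ _ hab hne
  have hpair : ¬(Equiv.swap i j a = i ∧ Equiv.swap i j b = j) := by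
    rintro ⟨ha, hb⟩
    exact hle (by simpa only [Equiv.Perm.mul_apply, ha, hb] using hab)
  simpa only [Equiv.swap_apply_self] using swap_apply_lt_swap_apply_of_covBy hij hlt hpair

section Block

open scoped Finset

variable {p : ℕ}

/-- The number of the domino containing position `k` when the positions `0, …, p - 1` of a word
are cut into consecutive pairs from the right; if `p` is odd, block `0` consists of position `0`
alone. -/
def block (k : Fin p) : Fin ((p + 1) / 2) :=
  ⟨(k + p % 2) / 2, by omega⟩

lemma val_block (k : Fin p) : (block k : ℕ) = (k + p % 2) / 2 := rfl

lemma block_mono : Monotone (block (p := p)) := by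
  intro i j hij
  rw [Fin.le_def] at hij ⊢
  simp only [val_block]
  omega

lemma card_block_fiber (i : Fin ((p + 1) / 2)) :
    #{k | block (p := p) k = i} = if (i : ℕ) = 0 ∧ ¬Even p then 1 else 2 := by
  have hi := i.isLt
  split_ifs with h
  · rw [Nat.even_iff] at h
    refine Finset.card_eq_one.mpr ⟨⟨0, by omega⟩, ?_⟩
    ext k
    simp only [Finset.mem_filter_univ, Finset.mem_singleton, Fin.ext_iff, val_block]
    omega
  · rw [Nat.even_iff] at h
    refine Finset.card_eq_two.mpr
      ⟨⟨2 * i - p % 2, by omega⟩, ⟨2 * i - p % 2 + 1, by omega⟩, by simp, ?_⟩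
    ext k
    simp only [Finset.mem_filter_univ, Finset.mem_insert, Finset.mem_singleton, Fin.ext_iff,
      val_block]
    omega

end Block

section Sign

variable {p : ℕ}

/-- The two-element blocks, as increasing pairs of positions. -/
def dominoPairs (p : ℕ) : Finset (Fin p × Fin p) :=
  Finset.univ.filter fun q => q.1 < q.2 ∧ block q.1 = block q.2

lemma mem_dominoPairs {q : Fin p × Fin p} :
    q ∈ dominoPairs p ↔ q.1 < q.2 ∧ block q.1 = block q.2 :=
  Finset.mem_filter_univ q

lemma mem_dominoPairs_iff_val {q : Fin p × Fin p} :
    q ∈ dominoPairs p ↔ (q.2 : ℕ) = q.1 + 1 ∧ Even (p - q.1) := by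
  have h₁ := q.1.isLt
  have h₂ := q.2.isLt
  rw [mem_dominoPairs, Fin.lt_def, Fin.ext_iff, val_block, val_block, Nat.even_iff]
  omega

lemma covBy_of_mem_dominoPairs {q : Fin p × Fin p} (hq : q ∈ dominoPairs p) : q.1 ⋖ q.2 := by
  rw [Fin.covBy_iff, Nat.covBy_iff_add_one_eq]
  exact (mem_dominoPairs_iff_val.mp hq).1.symm

lemma swap_apply_eq_self_of_mem_dominoPairs {q q' : Fin p × Fin p} (hq : q ∈ dominoPairs p)
    (hq' : q' ∈ dominoPairs p) (hne : q' ≠ q) :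
    Equiv.swap q.1 q.2 q'.1 = q'.1 ∧ Equiv.swap q.1 q.2 q'.2 = q'.2 := by
  have h₁ := q.1.isLt
  have h₂ := q'.1.isLt
  rw [mem_dominoPairs_iff_val, Nat.even_iff] at hq hq'
  rw [Ne, Prod.ext_iff, Fin.ext_iff, Fin.ext_iff] at hne
  constructor <;> apply Equiv.swap_apply_of_ne_of_ne <;> rw [Ne, Fin.ext_iff] <;> omega

/-- The contribution of a pair of positions to the sign `(-1) ^ comajP p w`. -/
def descentSign (w : Equiv.Perm (Fin p)) (q : Fin p × Fin p) : ℤ :=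
  if w q.2 < w q.1 then -1 else 1

lemma neg_one_pow_comajP (w : Equiv.Perm (Fin p)) :
    (-1 : ℤ) ^ comajP p w = ∏ q ∈ dominoPairs p, descentSign w q := by
  let pair : Fin (p - 1) → Fin p × Fin p := fun i => (⟨i, by omega⟩, ⟨i + 1, by omega⟩)
  have hmem (i : Fin (p - 1)) : pair i ∈ dominoPairs p ↔ Even (p - (i : ℕ)) := by
    simp only [mem_dominoPairs_iff_val, pair, true_and]
  have hterm (i : Fin (p - 1)) :
      (-1 : ℤ) ^ (if w (pair i).2 < w (pair i).1 then p - ((i : ℕ) + 1) else 0) =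
        if pair i ∈ dominoPairs p then descentSign w (pair i) else 1 := by
    have hparity : Even (p - ((i : ℕ) + 1)) ↔ ¬Even (p - (i : ℕ)) := by
      rw [Nat.even_iff, Nat.even_iff]
      omega
    simp only [hmem, descentSign]
    split_ifs with hdesc heven heven
    · exact (Nat.not_even_iff_odd.mp (mt hparity.mp (not_not.mpr heven))).neg_one_pow
    · exact (hparity.mpr heven).neg_one_pow
    · rfl
    · rfl
  calc (-1 : ℤ) ^ comajP p w
      = ∏ i, if pair i ∈ dominoPairs p then descentSign w (pair i) else 1 := by
        rw [comajP, ← Finset.prod_pow_eq_pow_sum]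
        exact Finset.prod_congr rfl fun i _ => hterm i
    _ = ∏ i with pair i ∈ dominoPairs p, descentSign w (pair i) := (Finset.prod_filter _ _).symm
    _ = ∏ q ∈ dominoPairs p, descentSign w q := by
        refine Finset.prod_nbij pair (fun i hi => (Finset.mem_filter.mp hi).2) ?_ ?_ fun _ _ => rfl
        · intro i _ j _ hij
          exact Fin.ext (Fin.mk.inj (congrArg Prod.fst hij))
        · intro q hq
          obtain ⟨hsucc, -⟩ := mem_dominoPairs_iff_val.mp hq
          have hpair : pair ⟨q.1, by omega⟩ = q := Prod.ext rfl (Fin.ext hsucc.symm)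
          exact ⟨_, by simpa [hpair] using hq, hpair⟩

lemma neg_one_pow_comajP_mul_swap (w : Equiv.Perm (Fin p)) {q : Fin p × Fin p}
    (hq : q ∈ dominoPairs p) :
    (-1 : ℤ) ^ comajP p (w * Equiv.swap q.1 q.2) = -(-1) ^ comajP p w := by
  rw [neg_one_pow_comajP, neg_one_pow_comajP, ← Finset.mul_prod_erase _ _ hq,
    ← Finset.mul_prod_erase _ _ hq, ← neg_mul]
  congr 1
  · have hne : w q.1 ≠ w q.2 := w.injective.ne (mem_dominoPairs.mp hq).1.ne
    simp only [descentSign, Equiv.Perm.mul_apply, Equiv.swap_apply_left, Equiv.swap_apply_right]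
    grind
  · refine Finset.prod_congr rfl fun q' hq' => ?_
    obtain ⟨hne, hmem⟩ := Finset.mem_erase.mp hq'
    obtain ⟨h₁, h₂⟩ := swap_apply_eq_self_of_mem_dominoPairs hq hmem hne
    simp only [descentSign, Equiv.Perm.mul_apply, h₁, h₂]

end Sign

section Cancellation

variable {p : ℕ} {le : Fin p → Fin p → Prop} {w : Equiv.Perm (Fin p)}

/-- The two-element blocks of the word `w` whose entries do not increase in the poset. -/
noncomputable def badPairs (le : Fin p → Fin p → Prop) (w : Equiv.Perm (Fin p)) :
    Finset (Fin p × Fin p) :=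
  (dominoPairs p).filter fun q => ¬le (w q.1) (w q.2)

/-- Every two-element block of the word `w` increases in the poset: these are the words fixed by
the sign-reversing involution. -/
def IsPaired (le : Fin p → Fin p → Prop) (w : Equiv.Perm (Fin p)) : Prop :=
  ∀ i j, i < j → block i = block j → le (w i) (w j)

lemma badPairs_nonempty_iff : (badPairs le w).Nonempty ↔ ¬IsPaired le w := by
  simp only [Finset.Nonempty, badPairs, Finset.mem_filter, mem_dominoPairs, IsPaired, Prod.exists]
  push Not
  simp only [and_assoc]

lemma IsLinExtPerm.badPairs_mul_swap (hw : IsLinExtPerm le w) {q : Fin p × Fin p}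
    (hq : q ∈ badPairs le w) : badPairs le (w * Equiv.swap q.1 q.2) = badPairs le w := by
  obtain ⟨hqp, -⟩ := Finset.mem_filter.mp hq
  have hlt : q.1 < q.2 := (mem_dominoPairs.mp hqp).1
  refine Finset.filter_congr fun q' hq' => not_congr ?_
  by_cases hne : q' = q
  · subst hne
    have hle : ¬le (w q'.2) (w q'.1) := fun h =>
      hlt.asymm (hw _ _ h (w.injective.ne hlt.ne'))
    simpa [hle] using (Finset.mem_filter.mp hq).2
  · obtain ⟨h₁, h₂⟩ := swap_apply_eq_self_of_mem_dominoPairs hqp hq' hne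
    simp only [Equiv.Perm.mul_apply, h₁, h₂]

lemma sum_isLinExtPerm_not_isPaired_eq_zero (le : Fin p → Fin p → Prop) :
    ∑ w : Equiv.Perm (Fin p) with IsLinExtPerm le w ∧ ¬IsPaired le w,
      (-1 : ℤ) ^ comajP p w = 0 := by
  have hbad {w} (hw : w ∈ Finset.univ.filter fun w : Equiv.Perm (Fin p) =>
      IsLinExtPerm le w ∧ ¬IsPaired le w) : (badPairs le w).Nonempty :=
    badPairs_nonempty_iff.mpr (Finset.mem_filter.mp hw).2.2
  have hpair {w} (h : (badPairs le w).Nonempty) : h.choose ∈ dominoPairs p :=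
    (Finset.mem_filter.mp h.choose_spec).1
  -- The transposed pair is chosen as a function of `badPairs le w`, which the swap preserves.
  refine Finset.sum_involution
    (fun w hw => w * Equiv.swap (hbad hw).choose.1 (hbad hw).choose.2) ?_ ?_ ?_ ?_
  · intro w hw
    rw [neg_one_pow_comajP_mul_swap w (hpair (hbad hw)), add_neg_cancel]
  · intro w hw _ heq
    exact (covBy_of_mem_dominoPairs (hpair (hbad hw))).ne
      (Equiv.swap_eq_one_iff.mp (mul_eq_left.mp heq))
  · intro w hw
    have hlin : IsLinExtPerm le w := (Finset.mem_filter.mp hw).2.1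
    have hspec := (hbad hw).choose_spec
    refine Finset.mem_filter.mpr ⟨Finset.mem_univ _,
      hlin.mul_swap (covBy_of_mem_dominoPairs (hpair _)) (Finset.mem_filter.mp hspec).2, ?_⟩
    rw [← badPairs_nonempty_iff, hlin.badPairs_mul_swap hspec]
    exact hbad hw
  · intro w hw
    have hlin : IsLinExtPerm le w := (Finset.mem_filter.mp hw).2.1
    simp only [hlin.badPairs_mul_swap (hbad hw).choose_spec]
    rw [mul_assoc, Equiv.swap_mul_self, mul_one]

lemma IsPaired.neg_one_pow_comajP (hnat : ∀ i j, le i j → i ≤ j) (hw : IsPaired le w) :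
    (-1 : ℤ) ^ comajP p w = 1 := by
  rw [_root_.neg_one_pow_comajP]
  refine Finset.prod_eq_one fun q hq => if_neg ?_
  obtain ⟨hlt, hblock⟩ := mem_dominoPairs.mp hq
  exact not_lt_of_ge (hnat _ _ (hw _ _ hlt hblock))

theorem sum_isLinExtPerm_eq_card_isPaired (hnat : ∀ i j, le i j → i ≤ j) :
    ∑ w : Equiv.Perm (Fin p) with IsLinExtPerm le w, (-1 : ℤ) ^ comajP p w =
      Nat.card {w // IsLinExtPerm le w ∧ IsPaired le w} := by
  rw [← Finset.sum_filter_add_sum_filter_not _ (IsPaired le), Finset.filter_filter,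
    Finset.filter_filter, sum_isLinExtPerm_not_isPaired_eq_zero, add_zero,
    Finset.sum_congr rfl fun w hw => (Finset.mem_filter.mp hw).2.2.neg_one_pow_comajP hnat,
    Finset.sum_const, nsmul_one, Nat.card_eq_fintype_card, Fintype.card_subtype]

end Cancellation

section Level

open scoped Finset

lemma exists_perm_comp_eq_iff_card_fiber_eq {α γ : Type*} [Fintype α] [DecidableEq γ]
    {f g : α → γ} :
    (∃ σ : Equiv.Perm α, f ∘ σ = g) ↔ ∀ c, #{a | f a = c} = #{a | g a = c} := by
  constructor
  · rintro ⟨σ, rfl⟩ c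
    exact (Finset.card_equiv σ (by simp)).symm
  · intro h
    have hequiv (c : γ) : Nonempty ({a // g a = c} ≃ {a // f a = c}) := by
      rw [← Fintype.card_eq, Fintype.card_subtype, Fintype.card_subtype, h]
    exact ⟨Equiv.ofFiberEquiv fun c => (hequiv c).some, funext fun a => Equiv.ofFiberEquiv_map _ a⟩

lemma sort_lt_sort_of_apply_eq {n : ℕ} {β : Type*} [LinearOrder β] {f : Fin n → β} {i j : Fin n}
    (hij : i < j) (heq : f (Tuple.sort f i) = f (Tuple.sort f j)) :
    Tuple.sort f i < Tuple.sort f j :=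
  (Tuple.eq_sort_iff.mp rfl).2 i j hij heq

variable {p : ℕ} {le : Fin p → Fin p → Prop} {w : Equiv.Perm (Fin p)}

/-- `b` numbers the dominoes of a dual domino tableau from `0`: the chain of order ideals is encoded
by the function with `b x = i` for `x` in `I_{i+1} − I_i`. -/
structure IsDominoLevel (le : Fin p → Fin p → Prop) (b : Fin p → Fin ((p + 1) / 2)) : Prop where
  mono : ∀ x y, le x y → b x ≤ b y
  card_fiber : ∀ i, #{x | b x = i} = #{k | block (p := p) k = i}
  comparable : ∀ x y, b x = b y → x ≠ y → le x y ∨ le y x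

lemma IsLinExtPerm.isDominoLevel_block_comp_symm (hw : IsLinExtPerm le w) (hpair : IsPaired le w) :
    IsDominoLevel le (block ∘ w.symm) where
  mono x y hxy := by
    rcases eq_or_ne x y with rfl | hne
    · exact le_rfl
    · have hlt : w.symm x < w.symm y :=
        hw _ _ (by simpa only [Equiv.apply_symm_apply]) (by simpa only [Equiv.apply_symm_apply])
      exact block_mono hlt.le
  card_fiber := exists_perm_comp_eq_iff_card_fiber_eq.mp
    ⟨w, by rw [Function.comp_assoc, Equiv.symm_comp_self, Function.comp_id]⟩
  comparable x y hxy hne := by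
    rcases lt_or_gt_of_ne (w.symm.injective.ne hne) with hlt | hlt
    · exact .inl (by simpa only [Equiv.apply_symm_apply] using hpair _ _ hlt hxy)
    · exact .inr (by simpa only [Equiv.apply_symm_apply] using hpair _ _ hlt hxy.symm)

lemma IsPaired.sort_block_comp_symm (hnat : ∀ i j, le i j → i ≤ j) (hw : IsPaired le w) :
    Tuple.sort (block ∘ w.symm) = w := by
  refine (Tuple.eq_sort_iff.mpr ⟨?_, fun i j hij hblock => ?_⟩).symm
  · simpa only [Function.comp_assoc, Equiv.symm_comp_self, Function.comp_id] using block_mono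
  · refine lt_of_le_of_ne (hnat _ _ (hw i j hij ?_)) (w.injective.ne hij.ne)
    simpa only [Function.comp_apply, Equiv.symm_apply_apply] using hblock

namespace IsDominoLevel

variable {b : Fin p → Fin ((p + 1) / 2)}

lemma comp_sort (hb : IsDominoLevel le b) : b ∘ Tuple.sort b = block := by
  obtain ⟨σ, hσ⟩ : ∃ σ : Equiv.Perm (Fin p), b ∘ σ = block :=
    exists_perm_comp_eq_iff_card_fiber_eq.mpr hb.card_fiber
  rw [← hσ]
  exact Tuple.unique_monotone (Tuple.monotone_sort b) (hσ ▸ block_mono)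

lemma isLinExtPerm_sort (hnat : ∀ i j, le i j → i ≤ j) (hb : IsDominoLevel le b) :
    IsLinExtPerm le (Tuple.sort b) := by
  intro i j hle hne
  by_contra! hji
  have hji : j < i := lt_of_le_of_ne hji fun h => hne (h ▸ rfl)
  have hlevel : b (Tuple.sort b j) = b (Tuple.sort b i) :=
    (Tuple.monotone_sort b hji.le).antisymm (hb.mono _ _ hle)
  exact (sort_lt_sort_of_apply_eq hji hlevel).not_ge (hnat _ _ hle)

lemma isPaired_sort (hnat : ∀ i j, le i j → i ≤ j) (hb : IsDominoLevel le b) :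
    IsPaired le (Tuple.sort b) := by
  intro i j hij hblock
  rw [← hb.comp_sort] at hblock
  have hlt : Tuple.sort b i < Tuple.sort b j := sort_lt_sort_of_apply_eq hij hblock
  exact (hb.comparable _ _ hblock hlt.ne).resolve_right fun h => hlt.not_ge (hnat _ _ h)

end IsDominoLevel

theorem card_isPaired_eq_card_isDominoLevel (hnat : ∀ i j, le i j → i ≤ j) :
    Nat.card {w // IsLinExtPerm le w ∧ IsPaired le w} = Nat.card {b // IsDominoLevel le b} :=
  Nat.card_congr
    { toFun w := ⟨block ∘ w.1.symm, w.2.1.isDominoLevel_block_comp_symm w.2.2⟩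
      invFun b := ⟨Tuple.sort b.1, b.2.isLinExtPerm_sort hnat, b.2.isPaired_sort hnat⟩
      left_inv w := Subtype.ext (w.2.2.sort_block_comp_symm hnat)
      right_inv b := Subtype.ext ((Equiv.comp_symm_eq _ _ _).mpr b.2.comp_sort.symm) }

end Level

section SublevelChain

variable {α : Type*} [Fintype α] {r : ℕ}

/-- The chain of sublevel sets of `b`, written so that its `i`-th difference is the fibre of `b`
over `i`. -/
def sublevelChain (b : α → Fin r) (k : Fin (r + 1)) : Finset α :=
  Finset.univ.filter fun x => (b x).castSucc < k

lemma mem_sublevelChain {b : α → Fin r} {k : Fin (r + 1)} {x : α} :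
    x ∈ sublevelChain b k ↔ (b x).castSucc < k :=
  Finset.mem_filter_univ x

lemma sublevelChain_mono (b : α → Fin r) : Monotone (sublevelChain b) :=
  fun _ _ hkl _ hx => mem_sublevelChain.mpr ((mem_sublevelChain.mp hx).trans_le hkl)

lemma sublevelChain_zero (b : α → Fin r) : sublevelChain b 0 = ∅ := by
  ext x
  simp [mem_sublevelChain]

lemma sublevelChain_last (b : α → Fin r) : sublevelChain b (Fin.last r) = Finset.univ := by
  ext x
  simp [mem_sublevelChain, Fin.castSucc_lt_last]

lemma sublevelChain_succ_sdiff_castSucc [DecidableEq α] (b : α → Fin r) (i : Fin r) :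
    sublevelChain b i.succ \ sublevelChain b i.castSucc = Finset.univ.filter (b · = i) := by
  ext x
  simp only [Finset.mem_sdiff, mem_sublevelChain, Fin.castSucc_lt_succ_iff,
    Fin.castSucc_lt_castSucc_iff, not_lt, Finset.mem_filter_univ, le_antisymm_iff]

lemma sublevelChain_injective :
    Function.Injective (sublevelChain : (α → Fin r) → Fin (r + 1) → Finset α) := by
  intro b b' h
  ext x
  have hx : x ∈ Finset.univ.filter (b' · = b x) := by
    rw [← sublevelChain_succ_sdiff_castSucc, ← h, sublevelChain_succ_sdiff_castSucc]
    exact Finset.mem_filter.mpr ⟨Finset.mem_univ x, rfl⟩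
  rw [(Finset.mem_filter.mp hx).2]

lemma exists_sublevelChain_eq {c : Fin (r + 1) → Finset α} (hmono : Monotone c) (hzero : c 0 = ∅)
    (hlast : c (Fin.last r) = Finset.univ) : ∃ b, sublevelChain b = c := by
  have hstep (x : α) : ∃ i : Fin r, x ∉ c i.castSucc ∧ x ∈ c i.succ := by
    by_contra! h
    have hnotMem (k : Fin (r + 1)) : x ∉ c k := by
      induction k using Fin.induction with
      | zero => simp [hzero]
      | succ i ih => exact h i ih
    exact hnotMem (Fin.last r) (hlast ▸ Finset.mem_univ x)
  choose b hnotMem hmem using hstep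
  refine ⟨b, ?_⟩
  ext k x
  rw [mem_sublevelChain]
  refine ⟨fun hk => ?_, fun hx => ?_⟩
  · exact hmono (Fin.castSucc_lt_iff_succ_le.mp hk) (hmem x)
  · exact lt_of_not_ge fun hk => hnotMem x (hmono hk hx)

end SublevelChain

section Tableau

open scoped Finset

variable {p : ℕ} {le : Fin p → Fin p → Prop}

lemma isTwoChainR_iff {s : Finset (Fin p)} :
    IsTwoChainR le s ↔ #s = 2 ∧ ∀ x ∈ s, ∀ y ∈ s, x ≠ y → le x y ∨ le y x := by
  constructor
  · rintro ⟨a, b, hne, hab, rfl⟩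
    exact ⟨Finset.card_pair hne, by grind⟩
  · rintro ⟨hcard, hcomp⟩
    obtain ⟨a, b, hne, rfl⟩ := Finset.card_eq_two.mp hcard
    rcases hcomp a (by simp) b (by simp) hne with hab | hba
    · exact ⟨a, b, hne, hab, rfl⟩
    · exact ⟨b, a, hne.symm, hba, Finset.pair_comm a b⟩

lemma forall_isIdealR_sublevelChain_iff {r : ℕ} {b : Fin p → Fin r} :
    (∀ k, IsIdealR le (sublevelChain b k)) ↔ ∀ x y, le x y → b x ≤ b y := by
  simp only [IsIdealR, mem_sublevelChain]
  constructor
  · intro h x y hxy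
    exact Fin.castSucc_lt_succ_iff.mp (h _ x y hxy Fin.castSucc_lt_succ)
  · intro h k x y hxy hy
    exact (Fin.castSucc_le_castSucc_iff.mpr (h x y hxy)).trans_lt hy

lemma eq_singleton_or_isTwoChainR_iff (s : Finset (Fin p)) (i : Fin ((p + 1) / 2)) :
    (if (i : ℕ) = 0 ∧ ¬Even p then ∃ a, s = {a} else IsTwoChainR le s) ↔
      #s = #{k | block (p := p) k = i} ∧ ∀ x ∈ s, ∀ y ∈ s, x ≠ y → le x y ∨ le y x := by
  rw [card_block_fiber]
  split_ifs
  · rw [← Finset.card_eq_one, iff_self_and]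
    exact fun h x hx y hy hne => absurd (Finset.card_le_one.mp h.le x hx y hy) hne
  · exact isTwoChainR_iff

lemma isDualDomino_sublevelChain_iff {b : Fin p → Fin ((p + 1) / 2)} :
    IsDualDomino le (sublevelChain b) ↔ IsDominoLevel le b := by
  have hsteps : ((∀ i : Fin ((p + 1) / 2), 1 ≤ (i : ℕ) → IsTwoChainR le {x | b x = i}) ∧
      ∀ i : Fin ((p + 1) / 2), (i : ℕ) = 0 →
        if Even p then IsTwoChainR le {x | b x = i}
        else ∃ a, ({x | b x = i} : Finset (Fin p)) = {a}) ↔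
      ∀ i, #{x | b x = i} = #{k | block (p := p) k = i} ∧
        ∀ x y, b x = i → b y = i → x ≠ y → le x y ∨ le y x := by
    rw [← forall_and]
    refine forall_congr' fun i => ?_
    have hstep := eq_singleton_or_isTwoChainR_iff (le := le) {x | b x = i} i
    simp only [Finset.mem_filter_univ] at hstep
    grind
  simp only [IsDualDomino, sublevelChain_succ_sdiff_castSucc, hsteps,
    forall_isIdealR_sublevelChain_iff, sublevelChain_zero, sublevelChain_last, true_and]
  constructor
  · rintro ⟨hmono, -, hfiber⟩
    exact ⟨hmono, fun i => (hfiber i).1, fun x y hxy => (hfiber (b y)).2 x y hxy rfl⟩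
  · rintro ⟨hmono, hcard, hcomp⟩
    exact ⟨hmono, fun i => sublevelChain_mono b (Fin.castSucc_le_succ i),
      fun i => ⟨hcard i, fun x y hx hy => hcomp x y (hx.trans hy.symm)⟩⟩

theorem card_isDominoLevel_eq_card_isDualDomino (le : Fin p → Fin p → Prop) :
    Nat.card {b // IsDominoLevel le b} = Nat.card {c // IsDualDomino le c} := by
  refine Nat.card_congr (Equiv.ofBijective
    (Subtype.map sublevelChain fun _ hb => isDualDomino_sublevelChain_iff.mpr hb)
    ⟨Subtype.map_injective _ sublevelChain_injective, ?_⟩)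
  rintro ⟨c, hc⟩
  obtain ⟨hzero, hlast, -, hsub, -⟩ := id hc
  obtain ⟨b, rfl⟩ := exists_sublevelChain_eq (Fin.monotone_iff_le_succ.mpr hsub) hzero hlast
  exact ⟨⟨b, isDualDomino_sublevelChain_iff.mp hc⟩, rfl⟩

end Tableau

theorem stmt9_general (p : ℕ) (le : Fin p → Fin p → Prop) (hnat : ∀ i j : Fin p, le i j → i ≤ j) :
    ∑ w ∈ Finset.univ.filter (fun w : Equiv.Perm (Fin p) => IsLinExtPerm le w),
        ((-1 : ℤ) ^ comajP p w) =
      (Nat.card {c : Fin ((p + 1) / 2 + 1) → Finset (Fin p) // IsDualDomino le c} : ℤ) := by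
  rw [sum_isLinExtPerm_eq_card_isPaired hnat, card_isPaired_eq_card_isDominoLevel hnat,
    card_isDominoLevel_eq_card_isDualDomino]

/-- For a finite natural partial order `P` on `{1,…,p}`,
`Σ_{w ∈ ℒ(P)} (−1)^{comaj(w)}` equals the number of dual `P`-domino tableaux. -/
theorem stmt9 (p : ℕ) (le : Fin p → Fin p → Prop)
    (hrefl : ∀ i, le i i) (hantisymm : ∀ i j, le i j → le j i → i = j)
    (htrans : ∀ i j k, le i j → le j k → le i k)
    (hnat : ∀ i j : Fin p, le i j → i ≤ j) :
    ∑ w ∈ Finset.univ.filter (fun w : Equiv.Perm (Fin p) => IsLinExtPerm le w),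
        ((-1 : ℤ) ^ comajP p w) =
      (Nat.card {c : Fin ((p + 1) / 2 + 1) → Finset (Fin p) // IsDualDomino le c} : ℤ) :=
  stmt9_general p le hnat
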